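/- Let G be a finite group, let (X, L, s, t) be a directed multigraph with V = |X| ≥ 1 sites and E = |L| links, let B ⊆ L be a set of boundary links such that the graph obtained by deleting the links in B is still connected, and let φ : G → G be a group homomorphism. Let U be a finite-dimensional complex representation of G with character χ_U. Consider the representation of ∏_{x ∈ X} G on H = ((L → G) → ℂ) ⊗ (⊗_{x ∈ X} W) acting on basis vectors by sending h(l) to g_{s(l)} h(l) g_{t(l)}⁻¹ for l ∉ B and to g_{s(l)} h(l) φ(g_{t(l)})⁻¹ for l ∈ B, and acting by U(g_x) on the matter factor at each site x. Let ∂X = {t(l) : l ∈ B}. Then the dimension of the invariant subspace equals Σ_C (|G|/|C|)^{E−V} · χ_U(C)^V · α(C)^{|∂X|}, the sum running over the conjugacy classes C of G, where α(C) = |{g ∈ C : φ(g) ∈ C}| / |C|. -/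

import Mathlib

open scoped TensorProduct

/-- Connectivity of the directed multigraph with sites `X` and links `L` obtained by
deleting the links in `B`, ignoring orientation. -/
def MultigraphConnectedOff {X L : Type*} (s t : L → X) (B : Finset L)
    [DecidableEq L] : Prop :=
  ∀ a b : X, Relation.ReflTransGen
    (fun u v => ∃ l : L, l ∉ B ∧ ((s l = u ∧ t l = v) ∨ (s l = v ∧ t l = u))) a b

/-- The twisted action of a gauge transformation `g : X → G` on a link configuration
`h : L → G`: on a bulk link `l ∉ B` it sends `h l` to `g (s l) * h l * (g (t l))⁻¹`,
while on a boundary link `l ∈ B` it sends `h l` to `g (s l) * h l * (φ (g (t l)))⁻¹`. -/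
def gaugeSmulTw {G X L : Type*} [Group G] [DecidableEq L] (s t : L → X)
    (B : Finset L) (φ : G →* G) (g : X → G) (h : L → G) : L → G :=
  fun l => g (s l) * h l * (if l ∈ B then φ (g (t l)) else g (t l))⁻¹

lemma gaugeSmulTw_mul {G X L : Type*} [Group G] [DecidableEq L] (s t : L → X)
    (B : Finset L) (φ : G →* G) (g g' : X → G) (h : L → G) :
    gaugeSmulTw s t B φ g (gaugeSmulTw s t B φ g' h) =
      gaugeSmulTw s t B φ (g * g') h := by
  funext l
  by_cases hl : l ∈ B <;> simp [gaugeSmulTw, hl, mul_assoc]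

/-- The representation of the group of gauge transformations `X → G` on the link
Hilbert space `(L → G) → ℂ` with twisted boundary conditions, sending the basis vector
`|h⟩` (the delta function at `h`) to `|gaugeSmulTw g h⟩`. -/
noncomputable def linkRepTw (G : Type*) [Group G] {X L : Type*} [DecidableEq L]
    (s t : L → X) (B : Finset L) (φ : G →* G) :
    Representation ℂ (X → G) ((L → G) → ℂ) where
  toFun g := LinearMap.funLeft ℂ ℂ (gaugeSmulTw s t B φ g⁻¹)
  map_one' := by
    ext f h
    show f (gaugeSmulTw s t B φ 1⁻¹ h) = f h
    congr 1
    funext l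
    simp [gaugeSmulTw]
  map_mul' g g' := by
    ext f h
    show f (gaugeSmulTw s t B φ (g * g')⁻¹ h) =
      f (gaugeSmulTw s t B φ g'⁻¹ (gaugeSmulTw s t B φ g⁻¹ h))
    rw [gaugeSmulTw_mul, mul_inv_rev]

/-- The representation of the group of gauge transformations `X → G` on the matter
Hilbert space `⨂ₓ W`, given on site `x` by `U (g x)`. -/
noncomputable def matterRep {G X W : Type*} [Group G] [AddCommGroup W] [Module ℂ W]
    (U : Representation ℂ G W) :
    Representation ℂ (X → G) (⨂[ℂ] (_ : X), W) where
  toFun g := PiTensorProduct.map (fun x => U (g x))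
  map_one' := by
    simp only [Pi.one_apply, map_one]
    exact PiTensorProduct.map_one
  map_mul' g g' := by
    simp only [Pi.mul_apply, map_mul]
    exact PiTensorProduct.map_mul _ _

/-!
The dimension of the invariants is the average of the character over all gauge transformations
`g : X → G`. The link factor of that character counts the configurations fixed by `g`, one link at
a time: on each link these are the elements conjugating the gauge value at the end (twisted by `φ`
on `B`) into the one at the start. There are `|G| / |C|` of them if both values lie in the same
class `C`, and none otherwise. Since the bulk links connect all sites, `g` contributes only if all
its values lie in one class `C` and moreover `φ (g x) ∈ C` at each `x ∈ ∂X`. For fixed `C` these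
conditions are independent from site to site, and the sum over `g` becomes a product over sites.
-/

section Trace

variable {ι R : Type*} [CommRing R]

section PiTensorProduct

variable {M : ι → Type*} [∀ i, AddCommGroup (M i)] [∀ i, Module R (M i)]
  [∀ i, Module.Free R (M i)] [∀ i, Module.Finite R (M i)]

lemma finite_piTensorProduct [Finite ι] : Module.Finite R (⨂[R] i, M i) :=
  .of_basis (Basis.piTensorProduct fun i => Module.Free.chooseBasis R (M i))

lemma trace_piTensorProduct_map [Fintype ι] (f : ∀ i, M i →ₗ[R] M i) :
    LinearMap.trace R (⨂[R] i, M i) (PiTensorProduct.map f) =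
      ∏ i, LinearMap.trace R (M i) (f i) := by
  classical
  let b := fun i => Module.Free.chooseBasis R (M i)
  simp_rw [LinearMap.trace_eq_matrix_trace R (Basis.piTensorProduct b),
    fun i => LinearMap.trace_eq_matrix_trace R (b i), Matrix.trace, Matrix.diag,
    LinearMap.toMatrix_apply, Basis.piTensorProduct_apply, PiTensorProduct.map_tprod,
    Basis.piTensorProduct_repr_tprod_apply, Finset.prod_univ_sum, Fintype.piFinset_univ]

end PiTensorProduct

lemma trace_funLeft [Finite ι] (f : ι → ι) :
    LinearMap.trace R (ι → R) (LinearMap.funLeft R R f) = Nat.card (Function.fixedPoints f) := by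
  classical
  have := Fintype.ofFinite ι
  rw [LinearMap.trace_eq_matrix_trace R (Pi.basisFun R ι), Nat.card_eq_fintype_card,
    Fintype.card_subtype]
  simp [Matrix.trace, LinearMap.funLeft_apply, Pi.single_apply, Function.mem_fixedPoints,
    Function.IsFixedPt]

end Trace

section Conjugacy

variable {G : Type*} [Group G] {a b : G}

lemma isConj_iff_exists_semiconjBy : IsConj a b ↔ ∃ h, SemiconjBy h a b := by
  simp_rw [isConj_iff, SemiconjBy, mul_inv_eq_iff_eq_mul]

lemma card_carrier_mul_card_semiconjBy (hab : IsConj a b) :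
    Nat.card (ConjClasses.mk a).carrier * Nat.card {h // SemiconjBy h a b} = Nat.card G := by
  obtain ⟨c, rfl⟩ := isConj_iff.1 hab
  have e : {h // SemiconjBy h a (c * a * c⁻¹)} ≃ MulAction.stabilizer (ConjAct G) a :=
    ((Equiv.mulLeft c⁻¹).trans ConjAct.toConjAct.toEquiv).subtypeEquiv fun h => by
      change h * a = c * a * c⁻¹ * h ↔ c⁻¹ * h * a * (c⁻¹ * h)⁻¹ = a
      rw [mul_inv_eq_iff_eq_mul]
      simp only [mul_assoc, inv_mul_eq_iff_eq_mul]
  rw [Nat.card_congr e, ← ConjAct.orbit_eq_carrier_conjClasses, ← Nat.card_prod,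
    Nat.card_congr (MulAction.orbitProdStabilizerEquivGroup (ConjAct G) a),
    Nat.card_congr ConjAct.ofConjAct.toEquiv]

lemma card_carrier_ne_zero [Finite G] (C : ConjClasses G) : Nat.card C.carrier ≠ 0 := by
  obtain ⟨a, rfl⟩ := ConjClasses.exists_rep C
  have : Nonempty (ConjClasses.mk a).carrier := ⟨a, ConjClasses.mem_carrier_mk⟩
  exact Nat.card_pos.ne'

lemma character_eq_of_isConj {k W : Type*} [Field k] [AddCommGroup W] [Module k W]
    (U : Representation k G W) (hab : IsConj a b) : U.character a = U.character b := by
  obtain ⟨c, rfl⟩ := isConj_iff.1 hab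
  exact (U.char_conj a c).symm

lemma character_out_eq_of_mem {k W : Type*} [Field k] [AddCommGroup W] [Module k W]
    (U : Representation k G W) {C : ConjClasses G} (ha : a ∈ C.carrier) :
    U.character a = U.character (Quotient.out C) :=
  character_eq_of_isConj U <| ConjClasses.mk_eq_mk_iff_isConj.1 <|
    (ConjClasses.mem_carrier_iff_mk_eq.1 ha).trans (Quotient.out_eq C).symm

end Conjugacy

lemma MultigraphConnectedOff.apply_eq {X L α : Type*} [DecidableEq L] {s t : L → X}
    {B : Finset L} (hconn : MultigraphConnectedOff s t B) {f : X → α}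
    (hf : ∀ l ∉ B, f (s l) = f (t l)) (x y : X) : f x = f y := by
  induction hconn x y with
  | refl => rfl
  | tail _ hstep ih =>
    obtain ⟨l, hl, ⟨rfl, rfl⟩ | ⟨rfl, rfl⟩⟩ := hstep
    · exact ih.trans (hf l hl)
    · exact ih.trans (hf l hl).symm

section Characters

variable {G X L : Type*} [Group G]

/-- The value by which the gauge transformation `g` acts at the end of the link `l`: the value of
`g` at the end site, twisted by `φ` on boundary links. -/
def targetGauge [DecidableEq L] (t : L → X) (B : Finset L) (φ : G →* G) (g : X → G) (l : L) : G :=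
  if l ∈ B then φ (g (t l)) else g (t l)

lemma gaugeSmulTw_inv_eq_self_iff [DecidableEq L] {s t : L → X} {B : Finset L} {φ : G →* G}
    {g : X → G} {h : L → G} :
    gaugeSmulTw s t B φ g⁻¹ h = h ↔
      ∀ l, SemiconjBy (h l) (targetGauge t B φ g l) (g (s l)) := by
  refine funext_iff.trans (forall_congr' fun l => ?_)
  by_cases hl : l ∈ B <;>
    simp [gaugeSmulTw, targetGauge, SemiconjBy, hl, mul_assoc, inv_mul_eq_iff_eq_mul]

lemma character_linkRepTw [Finite G] [Fintype L] [DecidableEq L] (s t : L → X) (B : Finset L)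
    (φ : G →* G) (g : X → G) :
    (linkRepTw G s t B φ).character g =
      ∏ l, (Nat.card {h // SemiconjBy h (targetGauge t B φ g l) (g (s l))} : ℂ) := by
  have e : Function.fixedPoints (gaugeSmulTw s t B φ g⁻¹) ≃
      ∀ l, {h // SemiconjBy h (targetGauge t B φ g l) (g (s l))} :=
    (Equiv.subtypeEquivRight fun _ => gaugeSmulTw_inv_eq_self_iff).trans
      (Equiv.subtypePiEquivPi
        (p := fun l h => SemiconjBy h (targetGauge t B φ g l) (g (s l))))
  rw [← Nat.cast_prod, ← Nat.card_pi, ← Nat.card_congr e]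
  exact trace_funLeft _

lemma character_matterRep [Fintype X] {W : Type*} [AddCommGroup W] [Module ℂ W]
    [FiniteDimensional ℂ W] (U : Representation ℂ G W) (g : X → G) :
    (matterRep U).character g = ∏ x, U.character (g x) :=
  trace_piTensorProduct_map _

end Characters

section SiteGauge

variable {G X L : Type*} [Group G] [Fintype G]

open scoped Classical in
/-- The values which a gauge transformation with all values in the conjugacy class `C` may take
at the site `x` if it is to fix some link configuration. -/
noncomputable def siteGauge (t : L → X) (B : Finset L) (φ : G →* G) (C : ConjClasses G) (x : X) :
    Finset G :=
  {a | a ∈ C.carrier ∧ ((∃ l ∈ B, t l = x) → φ a ∈ C.carrier)}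

variable {s t : L → X} {B : Finset L} {φ : G →* G} {C : ConjClasses G} {g : X → G}

lemma mem_siteGauge {x : X} {a : G} :
    a ∈ siteGauge t B φ C x ↔
      a ∈ C.carrier ∧ ((∃ l ∈ B, t l = x) → φ a ∈ C.carrier) := by
  simp [siteGauge]

lemma card_siteGauge [DecidableEq X] (t : L → X) (B : Finset L) (φ : G →* G)
    (C : ConjClasses G) (x : X) :
    (siteGauge t B φ C x).card = if x ∈ B.image t then
      Nat.card {g ∈ C.carrier | φ g ∈ C.carrier} else Nat.card C.carrier := by
  rw [← Set.ncard_coe_finset]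
  split_ifs with hx <;> rw [Nat.card_coe_set_eq] <;> congr 1 <;> ext a <;>
    simp_all [mem_siteGauge]

variable [DecidableEq L]

lemma targetGauge_mem_carrier (hg : ∀ x, g x ∈ siteGauge t B φ C x) (l : L) :
    targetGauge t B φ g l ∈ C.carrier := by
  unfold targetGauge
  split_ifs with hl
  · exact (mem_siteGauge.1 (hg (t l))).2 ⟨l, hl, rfl⟩
  · exact (mem_siteGauge.1 (hg (t l))).1

lemma exists_forall_mem_siteGauge [Nonempty X] (hconn : MultigraphConnectedOff s t B)
    (hg : ∀ l, IsConj (targetGauge t B φ g l) (g (s l))) :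
    ∃ C, ∀ x, g x ∈ siteGauge t B φ C x := by
  obtain ⟨x₀⟩ := ‹Nonempty X›
  have hmk : ∀ l, ConjClasses.mk (targetGauge t B φ g l) = ConjClasses.mk (g (s l)) := fun l =>
    ConjClasses.mk_eq_mk_iff_isConj.2 (hg l)
  have hconst : ∀ x, ConjClasses.mk (g x) = ConjClasses.mk (g x₀) := fun x =>
    hconn.apply_eq (f := fun x => ConjClasses.mk (g x))
      (fun l hl => by simpa [targetGauge, hl] using (hmk l).symm) x x₀
  refine ⟨ConjClasses.mk (g x₀), fun x => mem_siteGauge.2 ?_⟩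
  simp_rw [ConjClasses.mem_carrier_iff_mk_eq]
  refine ⟨hconst x, ?_⟩
  rintro ⟨l, hl, rfl⟩
  simpa [targetGauge, hl, hconst] using hmk l

lemma character_linkRepTw_of_mem [Fintype L] (hg : ∀ x, g x ∈ siteGauge t B φ C x) :
    (linkRepTw G s t B φ).character g =
      ((Fintype.card G : ℂ) / Nat.card C.carrier) ^ Fintype.card L := by
  have hlink : ∀ l, (Nat.card {h // SemiconjBy h (targetGauge t B φ g l) (g (s l))} : ℂ) =
      (Fintype.card G : ℂ) / Nat.card C.carrier := fun l => by
    have htgt := ConjClasses.mem_carrier_iff_mk_eq.1 (targetGauge_mem_carrier hg l)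
    have hsrc := ConjClasses.mem_carrier_iff_mk_eq.1 (mem_siteGauge.1 (hg (s l))).1
    have hcard := card_carrier_mul_card_semiconjBy
      (ConjClasses.mk_eq_mk_iff_isConj.1 (htgt.trans hsrc.symm))
    rw [htgt, Nat.card_eq_fintype_card (α := G)] at hcard
    rw [eq_div_iff (Nat.cast_ne_zero.2 (card_carrier_ne_zero C)), mul_comm]
    exact_mod_cast hcard
  simp_rw [character_linkRepTw, hlink, Finset.prod_const, Finset.card_univ]

lemma character_linkRepTw_eq_zero [Nonempty X] [Finite L] (hconn : MultigraphConnectedOff s t B)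
    (hg : ∀ C, ¬ ∀ x, g x ∈ siteGauge t B φ C x) :
    (linkRepTw G s t B φ).character g = 0 := by
  have := Fintype.ofFinite L
  obtain ⟨l, hl⟩ : ∃ l, ¬ IsConj (targetGauge t B φ g l) (g (s l)) := by
    by_contra! hall
    obtain ⟨C, hC⟩ := exists_forall_mem_siteGauge hconn hall
    exact hg C hC
  have : IsEmpty {h // SemiconjBy h (targetGauge t B φ g l) (g (s l))} :=
    ⟨fun h => hl (isConj_iff_exists_semiconjBy.2 ⟨h, h.2⟩)⟩
  rw [character_linkRepTw]
  exact Finset.prod_eq_zero (Finset.mem_univ l) (by simp)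

end SiteGauge

section Sums

variable {G X L : Type*} [Group G] [Fintype G] [Fintype X] [DecidableEq X]

lemma sum_eq_sum_conjClasses_sum_piFinset [Nonempty X] [Fintype (ConjClasses G)] {A : Type*}
    [AddCommMonoid A] (t : L → X) (B : Finset L) (φ : G →* G) (F : (X → G) → A)
    (hF : ∀ g, (∀ C, ¬ ∀ x, g x ∈ siteGauge t B φ C x) → F g = 0) :
    ∑ g, F g = ∑ C, ∑ g ∈ Fintype.piFinset (siteGauge t B φ C), F g := by
  classical
  obtain ⟨x₀⟩ := ‹Nonempty X›
  rw [← Finset.sum_biUnion]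
  · refine (Finset.sum_subset (Finset.subset_univ _) fun g _ hg => hF g ?_).symm
    simpa using hg
  · refine fun C _ C' _ hne => Finset.disjoint_left.2 fun g hC hC' => hne ?_
    have hmk {D : ConjClasses G} (hD : g ∈ Fintype.piFinset (siteGauge t B φ D)) :
        ConjClasses.mk (g x₀) = D :=
      ConjClasses.mem_carrier_iff_mk_eq.1 (mem_siteGauge.1 (Fintype.mem_piFinset.1 hD x₀)).1
    exact (hmk hC).symm.trans (hmk hC')

lemma prod_card_siteGauge {k : Type*} [Field k] [CharZero k] (t : L → X) (B : Finset L)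
    (φ : G →* G) (C : ConjClasses G) :
    ∏ x, ((siteGauge t B φ C x).card : k) =
      (Nat.card C.carrier : k) ^ Fintype.card X *
        ((Nat.card {g ∈ C.carrier | φ g ∈ C.carrier} : k) / Nat.card C.carrier) ^
          (B.image t).card := by
  have hC : (Nat.card C.carrier : k) ≠ 0 := Nat.cast_ne_zero.2 (card_carrier_ne_zero C)
  have hsite : ∀ x, ((siteGauge t B φ C x).card : k) = Nat.card C.carrier *
      if x ∈ B.image t then
        (Nat.card {g ∈ C.carrier | φ g ∈ C.carrier} : k) / Nat.card C.carrier else 1 := fun x => by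
    rw [card_siteGauge]
    split_ifs
    · rw [mul_div_cancel₀ _ hC]
    · rw [mul_one]
  simp_rw [hsite, Finset.prod_mul_distrib, Finset.prod_const, Finset.card_univ,
    Finset.prod_ite_mem, Finset.univ_inter, Finset.prod_const]

lemma sum_piFinset_siteGauge_prod_character {k W : Type*} [Field k] [AddCommGroup W] [Module k W]
    (U : Representation k G W) (t : L → X) (B : Finset L) (φ : G →* G) (C : ConjClasses G) :
    ∑ g ∈ Fintype.piFinset (siteGauge t B φ C), ∏ x, U.character (g x) =
      (∏ x, ((siteGauge t B φ C x).card : k)) * U.character (Quotient.out C) ^ Fintype.card X := by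
  have hsite : ∀ x, ∑ a ∈ siteGauge t B φ C x, U.character a =
      (siteGauge t B φ C x).card * U.character (Quotient.out C) := fun x => by
    rw [Finset.sum_congr rfl fun a ha => character_out_eq_of_mem U (mem_siteGauge.1 ha).1,
      Finset.sum_const, nsmul_eq_mul]
  simp_rw [← Finset.prod_univ_sum (siteGauge t B φ C) fun _ a => U.character a, hsite,
    Finset.prod_mul_distrib, Finset.prod_const, Finset.card_univ]

lemma finrank_invariants_tprod_matterRep {V W : Type*} [AddCommGroup V] [Module ℂ V]
    [FiniteDimensional ℂ V] [AddCommGroup W] [Module ℂ W] [FiniteDimensional ℂ W]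
    (ρ : Representation ℂ (X → G) V) (U : Representation ℂ G W) :
    (Module.finrank ℂ (ρ.tprod (matterRep U)).invariants : ℂ) =
      ((Fintype.card G : ℂ) ^ Fintype.card X)⁻¹ *
        ∑ g, ρ.character g * ∏ x, U.character (g x) := by
  have : Module.Finite ℂ (⨂[ℂ] (_ : X), W) := finite_piTensorProduct
  have : Invertible (Nat.card (X → G) : ℂ) :=
    invertibleOfNonzero (Nat.cast_ne_zero.2 Nat.card_pos.ne')
  rw [← Representation.card_inv_mul_sum_char_eq_finrank, Representation.char_tensor]
  simp [character_matterRep]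

lemma sum_character_linkRepTw_mul [Nonempty X] [Fintype (ConjClasses G)] [Fintype L]
    [DecidableEq L] {s t : L → X} {B : Finset L} (hconn : MultigraphConnectedOff s t B)
    (φ : G →* G) (F : (X → G) → ℂ) :
    ∑ g, (linkRepTw G s t B φ).character g * F g =
      ∑ C : ConjClasses G, ((Fintype.card G : ℂ) / Nat.card C.carrier) ^ Fintype.card L *
        ∑ g ∈ Fintype.piFinset (siteGauge t B φ C), F g := by
  rw [sum_eq_sum_conjClasses_sum_piFinset t B φ _ fun g hg => by
    rw [character_linkRepTw_eq_zero hconn hg, zero_mul]]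
  refine Finset.sum_congr rfl fun C _ => ?_
  rw [Finset.mul_sum]
  exact Finset.sum_congr rfl fun g hg => by
    rw [character_linkRepTw_of_mem (Fintype.mem_piFinset.1 hg)]

end Sums

/-- **Counting formula with boundary conditions twisted by a group homomorphism.** -/
theorem counting_formula_twisted
    {G X L : Type*} [Group G] [Fintype G] [DecidableEq G]
    [Fintype X] [Nonempty X] [DecidableEq X] [Fintype L] [DecidableEq L]
    (s t : L → X) (B : Finset L)
    (hconn : MultigraphConnectedOff s t B)
    (φ : G →* G)
    {W : Type*} [AddCommGroup W] [Module ℂ W] [FiniteDimensional ℂ W]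
    (U : Representation ℂ G W) :
    (Module.finrank ℂ ((linkRepTw G s t B φ).tprod (matterRep (X := X) U)).invariants : ℂ) =
      ∑ C : ConjClasses G,
        ((Fintype.card G : ℂ) / (Nat.card C.carrier : ℂ)) ^
            ((Fintype.card L : ℤ) - (Fintype.card X : ℤ)) *
          (LinearMap.trace ℂ W (U (Quotient.out C))) ^ (Fintype.card X) *
          ((Nat.card {g ∈ C.carrier | φ g ∈ C.carrier} : ℂ) /
              (Nat.card C.carrier : ℂ)) ^ (B.image t).card := by
  rw [finrank_invariants_tprod_matterRep, sum_character_linkRepTw_mul hconn, Finset.mul_sum]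
  refine Finset.sum_congr rfl fun C _ => ?_
  have hG : (Fintype.card G : ℂ) ≠ 0 := Nat.cast_ne_zero.2 Fintype.card_ne_zero
  have hC : (Nat.card C.carrier : ℂ) ≠ 0 := Nat.cast_ne_zero.2 (card_carrier_ne_zero C)
  rw [sum_piFinset_siteGauge_prod_character, prod_card_siteGauge,
    zpow_sub₀ (div_ne_zero hG hC), zpow_natCast, zpow_natCast, Representation.character,
    div_pow _ _ (Fintype.card X)]
  field_simp
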